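/- There exists a universal constant K > 0 with the following property. Let C_reg ≥ 0 and let ω = Σ_{k≥1} ω_k, where each ω_k : ℝ² → (−∞,0] is smooth and compactly supported, ω_k = 0 for all sufficiently large k, supp ω_k ⊂ {2^{k−1} ≤ |x| ≤ 2^{k+1}}, and ‖ω_k‖_{S¹₃} ≤ C_reg. Then for all s ∈ ℝ and θ ∈ S¹, |T(Δω)(s,θ) − Σ_{k ≥ 1, 2^{k+1} ≥ |s|} T(Δω_k)(0,θ)| ≤ K · C_reg, where Δ = ∂_{x₁}² + ∂_{x₂}² is the Laplacian on ℝ². -/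

import Mathlib

open MeasureTheory Real

noncomputable section

/-- Directional derivative of a function on `ℝ²` in the direction `v`. -/
def pd (v : ℝ × ℝ) (ψ : ℝ × ℝ → ℝ) : ℝ × ℝ → ℝ := fun p => fderiv ℝ ψ p v

/-- The Laplacian `Δ = ∂_{x₁}² + ∂_{x₂}²` on `ℝ²`. -/
def lap (ψ : ℝ × ℝ → ℝ) : ℝ × ℝ → ℝ := fun p =>
  pd (1, 0) (pd (1, 0) ψ) p + pd (0, 1) (pd (0, 1) ψ) p

/-- The X-ray transform `Tψ(s,θ)`. -/
def xray (ψ : ℝ × ℝ → ℝ) (s θ : ℝ) : ℝ :=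
  ∫ t : ℝ, ψ (t * Real.cos θ - s * Real.sin θ, t * Real.sin θ + s * Real.cos θ)

/-- The Kohn–Nirenberg norm `‖ψ‖_{S¹₃}` is at most `C`. -/
def KNle (ψ : ℝ × ℝ → ℝ) (C : ℝ) : Prop :=
  ∀ γ₁ γ₂ : ℕ, γ₁ + γ₂ ≤ 3 → ∀ p : ℝ × ℝ,
    |Real.sqrt (1 + p.1 ^ 2 + p.2 ^ 2) ^ ((γ₁ + γ₂ : ℤ) - 1) *
      (pd (1, 0))^[γ₁] ((pd (0, 1))^[γ₂] ψ) p| ≤ C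

/-- The dyadic annulus `{2^{k−1} ≤ |x| ≤ 2^{k+1}}` in `ℝ²`. -/
def annulus (k : ℕ) : Set (ℝ × ℝ) :=
  {p | (2 : ℝ) ^ ((k : ℤ) - 1) ≤ Real.sqrt (p.1 ^ 2 + p.2 ^ 2) ∧
       Real.sqrt (p.1 ^ 2 + p.2 ^ 2) ≤ 2 ^ (k + 1)}

/-!
At scale `2 ^ k ≥ |s| / 2` the weight `ω k` is smooth on the scale of its support: `∇Δω k` is
`O(C / 4 ^ k)` there, so moving the line by `|s|` changes the integral of `Δω k` along a chord of
length `O(2 ^ k)` by `O(C |s| / 2 ^ k)`. These errors form a geometric series dominated by its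
largest term, which is `O(C)`. The pieces with `2 ^ (k + 1) < |s|` do not meet the line at all.
-/

section Derivatives

variable {ψ : ℝ × ℝ → ℝ} {ι : Type*} {u : Finset ι} {f : ι → ℝ × ℝ → ℝ}

lemma contDiff_pd {m n : WithTop ℕ∞} (hψ : ContDiff ℝ n ψ) (hmn : m + 1 ≤ n) (v : ℝ × ℝ) :
    ContDiff ℝ m (pd v ψ) :=
  (hψ.fderiv_right hmn).clm_apply contDiff_const

lemma contDiff_lap {m n : WithTop ℕ∞} (hψ : ContDiff ℝ n ψ) (hmn : m + 2 ≤ n) :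
    ContDiff ℝ m (lap ψ) := by
  have second (v : ℝ × ℝ) : ContDiff ℝ m (pd v (pd v ψ)) :=
    contDiff_pd (contDiff_pd hψ (by rwa [add_assoc, one_add_one_eq_two]) v) le_rfl v
  exact (second _).add (second _)

lemma pd_zero (v : ℝ × ℝ) : pd v 0 = 0 := by
  funext p
  simp [pd]

lemma lap_zero : lap 0 = 0 := by
  funext p
  simp [lap, pd_zero]

lemma pd_add {φ : ℝ × ℝ → ℝ} (hφ : Differentiable ℝ φ) (hψ : Differentiable ℝ ψ)
    (v : ℝ × ℝ) : pd v (fun p => φ p + ψ p) = fun p => pd v φ p + pd v ψ p := by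
  funext p
  simp [pd, fderiv_fun_add (hφ p) (hψ p)]

lemma pd_sum (hf : ∀ i ∈ u, Differentiable ℝ (f i)) (v : ℝ × ℝ) :
    pd v (fun p => ∑ i ∈ u, f i p) = fun p => ∑ i ∈ u, pd v (f i) p := by
  funext p
  simp [pd, fderiv_fun_sum fun i hi => hf i hi p]

lemma lap_sum (hf : ∀ i ∈ u, ContDiff ℝ 2 (f i)) :
    lap (fun p => ∑ i ∈ u, f i p) = fun p => ∑ i ∈ u, lap (f i) p := by
  have second (v : ℝ × ℝ) : pd v (pd v fun p => ∑ i ∈ u, f i p) =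
      fun p => ∑ i ∈ u, pd v (pd v (f i)) p := by
    rw [pd_sum fun i hi => (hf i hi).differentiable two_ne_zero,
      pd_sum fun i hi => (contDiff_pd (hf i hi) one_add_one_eq_two.le v).differentiable one_ne_zero]
  funext p
  simp only [lap, second, Finset.sum_add_distrib]

lemma pd_comm (hψ : ContDiff ℝ 2 ψ) (v w : ℝ × ℝ) : pd v (pd w ψ) = pd w (pd v ψ) := by
  funext p
  have hd : DifferentiableAt ℝ (fderiv ℝ ψ) p :=
    (hψ.fderiv_right one_add_one_eq_two.le).differentiable one_ne_zero p
  have second (a b : ℝ × ℝ) : pd a (pd b ψ) p = fderiv ℝ (fderiv ℝ ψ) p a b := by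
    unfold pd
    simp [fderiv_clm_apply hd (differentiableAt_const b)]
  rw [second, second]
  exact hψ.contDiffAt.isSymmSndFDerivAt (by simp) v w

lemma tsupport_pd_subset (v : ℝ × ℝ) (ψ : ℝ × ℝ → ℝ) : tsupport (pd v ψ) ⊆ tsupport ψ :=
  tsupport_fderiv_apply_subset ℝ v

lemma tsupport_lap_subset (ψ : ℝ × ℝ → ℝ) : tsupport (lap ψ) ⊆ tsupport ψ :=
  have second (v : ℝ × ℝ) : tsupport (pd v (pd v ψ)) ⊆ tsupport ψ :=
    (tsupport_pd_subset v _).trans (tsupport_pd_subset v ψ)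
  (tsupport_add _ _).trans (Set.union_subset (second _) (second _))

lemma abs_pd_le (v : ℝ × ℝ) (ψ : ℝ × ℝ → ℝ) (p : ℝ × ℝ) :
    |pd v ψ p| ≤ |v.1| * |pd (1, 0) ψ p| + |v.2| * |pd (0, 1) ψ p| := by
  have hv : v = v.1 • ((1, 0) : ℝ × ℝ) + v.2 • ((0, 1) : ℝ × ℝ) := by simp
  have hpd : pd v ψ p = v.1 * pd (1, 0) ψ p + v.2 * pd (0, 1) ψ p := by
    conv_lhs => rw [pd, hv, map_add, map_smul, map_smul]
    rfl
  rw [hpd, ← abs_mul, ← abs_mul]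
  exact abs_add_le _ _

lemma abs_pd_lap_le_of_third_order_le {B : ℝ} (hψ : ContDiff ℝ 3 ψ) {p : ℝ × ℝ}
    (hB : ∀ i j, i + j = 3 → |(pd (1, 0))^[i] ((pd (0, 1))^[j] ψ) p| ≤ B) (v : ℝ × ℝ) :
    |pd v (lap ψ) p| ≤ (|v.1| + |v.2|) * (2 * B) := by
  have hpd (w : ℝ × ℝ) : ContDiff ℝ 2 (pd w ψ) := contDiff_pd hψ two_add_one_eq_three.le w
  have hpd_pd (w : ℝ × ℝ) : Differentiable ℝ (pd w (pd w ψ)) :=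
    (contDiff_pd (hpd w) one_add_one_eq_two.le w).differentiable one_ne_zero
  have expand (w : ℝ × ℝ) : pd w (lap ψ) p =
      pd w (pd (1, 0) (pd (1, 0) ψ)) p + pd w (pd (0, 1) (pd (0, 1) ψ)) p :=
    congrFun (pd_add (hpd_pd _) (hpd_pd _) w) p
  have hfst : |pd (1, 0) (lap ψ) p| ≤ 2 * B := by
    rw [expand, two_mul]
    exact (abs_add_le _ _).trans (add_le_add (hB 3 0 rfl) (hB 1 2 rfl))
  have hsnd : |pd (0, 1) (lap ψ) p| ≤ 2 * B := by
    rw [expand, pd_comm (hpd _), pd_comm (hψ.of_le (by norm_num)) (0, 1) (1, 0), two_mul]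
    exact (abs_add_le _ _).trans (add_le_add (hB 2 1 rfl) (hB 0 3 rfl))
  calc |pd v (lap ψ) p|
      ≤ |v.1| * |pd (1, 0) (lap ψ) p| + |v.2| * |pd (0, 1) (lap ψ) p| := abs_pd_le v _ p
    _ ≤ |v.1| * (2 * B) + |v.2| * (2 * B) := by gcongr
    _ = (|v.1| + |v.2|) * (2 * B) := by ring

end Derivatives

namespace KNle

variable {ψ : ℝ × ℝ → ℝ} {C r : ℝ}

lemma nonneg (h : KNle ψ C) : 0 ≤ C :=
  (abs_nonneg _).trans (h 0 0 (Nat.zero_le 3) 0)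

lemma abs_iterate_pd_le (h : KNle ψ C) (hr : 0 < r) {p : ℝ × ℝ}
    (hp : r ≤ √(p.1 ^ 2 + p.2 ^ 2)) {i j n : ℕ} (hij : i + j = n + 1) (hn : n ≤ 2) :
    |(pd (1, 0))^[i] ((pd (0, 1))^[j] ψ) p| ≤ C / r ^ n := by
  have hrp : r ≤ √(1 + p.1 ^ 2 + p.2 ^ 2) := hp.trans (Real.sqrt_le_sqrt (by linarith))
  have hexp : ((i : ℤ) + j) - 1 = n := by omega
  have hbound := h i j (by omega) p
  rw [hexp, zpow_natCast, abs_mul, abs_of_nonneg (by positivity)] at hbound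
  rw [le_div_iff₀' (by positivity)]
  exact le_trans (by gcongr) hbound

lemma abs_pd_lap_le (h : KNle ψ C) (hψ : ContDiff ℝ 3 ψ) (hr : 0 < r)
    (hsupp : ∀ p ∈ tsupport ψ, r ≤ √(p.1 ^ 2 + p.2 ^ 2)) (v p : ℝ × ℝ) :
    |pd v (lap ψ) p| ≤ (|v.1| + |v.2|) * (2 * (C / r ^ 2)) := by
  by_cases hp : p ∈ tsupport ψ
  · exact abs_pd_lap_le_of_third_order_le hψ
      (fun i j hij => h.abs_iterate_pd_le hr (hsupp p hp) hij le_rfl) v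
  · have hzero : pd v (lap ψ) p = 0 := image_eq_zero_of_notMem_tsupport fun hmem =>
      hp (tsupport_lap_subset ψ (tsupport_pd_subset v _ hmem))
    have := h.nonneg
    rw [hzero, abs_zero]
    positivity

end KNle

/-- The closed Euclidean disk of radius `R` about the origin. `Metric.closedBall` would be a square,
since `ℝ × ℝ` carries the sup norm. -/
def disk (R : ℝ) : Set (ℝ × ℝ) := {p | √(p.1 ^ 2 + p.2 ^ 2) ≤ R}

/-- The point with parameter `t` on the line of direction `(cos θ, sin θ)` at signed distance `s`
from the origin, so that `xray ψ s θ` is the integral of `ψ (linePoint s θ t)` over `t`. -/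
def linePoint (s θ t : ℝ) : ℝ × ℝ :=
  (t * Real.cos θ - s * Real.sin θ, t * Real.sin θ + s * Real.cos θ)

lemma linePoint_mem_disk_iff {s θ t R : ℝ} :
    linePoint s θ t ∈ disk R ↔ √(t ^ 2 + s ^ 2) ≤ R := by
  have hnorm : (linePoint s θ t).1 ^ 2 + (linePoint s θ t).2 ^ 2 = t ^ 2 + s ^ 2 := by
    simp only [linePoint]
    linear_combination (t ^ 2 + s ^ 2) * Real.sin_sq_add_cos_sq θ
  change √((linePoint s θ t).1 ^ 2 + (linePoint s θ t).2 ^ 2) ≤ R ↔ _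
  rw [hnorm]

lemma continuous_linePoint (s θ : ℝ) : Continuous (linePoint s θ) := by
  unfold linePoint
  fun_prop

lemma hasDerivAt_linePoint (s θ t : ℝ) :
    HasDerivAt (fun u => linePoint u θ t) (-Real.sin θ, Real.cos θ) s := by
  have hfst := ((hasDerivAt_id s).mul_const (Real.sin θ)).const_sub (t * Real.cos θ)
  have hsnd := ((hasDerivAt_id s).mul_const (Real.cos θ)).const_add (t * Real.sin θ)
  simpa [linePoint] using hfst.prodMk hsnd

section XRay

variable {f : ℝ × ℝ → ℝ} {R M : ℝ}

lemma apply_linePoint_eq_zero_of_lt_abs_offset (hsupp : Function.support f ⊆ disk R) {s : ℝ}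
    (hs : R < |s|) (θ t : ℝ) : f (linePoint s θ t) = 0 := by
  by_contra h
  have hle : √(t ^ 2 + s ^ 2) ≤ R := linePoint_mem_disk_iff.mp (hsupp h)
  exact (hs.trans_le (Real.abs_le_sqrt (by linarith [sq_nonneg t]))).not_ge hle

lemma apply_linePoint_eq_zero_of_notMem_Icc (hsupp : Function.support f ⊆ disk R) (s θ : ℝ) {t : ℝ}
    (ht : t ∉ Set.Icc (-R) R) : f (linePoint s θ t) = 0 := by
  by_contra h
  have hle : √(t ^ 2 + s ^ 2) ≤ R := linePoint_mem_disk_iff.mp (hsupp h)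
  exact ht (abs_le.mp ((Real.abs_le_sqrt (by linarith [sq_nonneg s])).trans hle))

lemma integrable_comp_linePoint (hf : Continuous f) (hsupp : Function.support f ⊆ disk R)
    (s θ : ℝ) : Integrable fun t => f (linePoint s θ t) :=
  (hf.comp (continuous_linePoint s θ)).integrable_of_hasCompactSupport <|
    HasCompactSupport.intro isCompact_Icc
      fun _ => apply_linePoint_eq_zero_of_notMem_Icc hsupp s θ

lemma xray_eq_zero_of_lt_abs (hsupp : Function.support f ⊆ disk R) {s : ℝ} (hs : R < |s|)
    (θ : ℝ) : xray f s θ = 0 :=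
  integral_eq_zero_of_ae (.of_forall (apply_linePoint_eq_zero_of_lt_abs_offset hsupp hs θ))

lemma abs_apply_linePoint_sub_le (hf : Differentiable ℝ f) {θ : ℝ}
    (hM : ∀ p, |pd (-Real.sin θ, Real.cos θ) f p| ≤ M) (s s' t : ℝ) :
    |f (linePoint s θ t) - f (linePoint s' θ t)| ≤ M * |s - s'| :=
  convex_univ.norm_image_sub_le_of_norm_hasDerivWithin_le (f := fun u => f (linePoint u θ t))
    (fun u _ => ((hf _).hasFDerivAt.comp_hasDerivAt u
      (hasDerivAt_linePoint u θ t)).hasDerivWithinAt)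
    (fun _ _ => hM _) (Set.mem_univ s') (Set.mem_univ s)

lemma abs_xray_sub_le (hf : Differentiable ℝ f) (hR : 0 ≤ R)
    (hsupp : Function.support f ⊆ disk R) {θ : ℝ}
    (hM : ∀ p, |pd (-Real.sin θ, Real.cos θ) f p| ≤ M) (s s' : ℝ) :
    |xray f s θ - xray f s' θ| ≤ M * |s - s'| * (2 * R) := by
  have hint (u : ℝ) := integrable_comp_linePoint hf.continuous hsupp u θ
  have hsub : xray f s θ - xray f s' θ =
      ∫ t in Set.Icc (-R) R, (f (linePoint s θ t) - f (linePoint s' θ t)) := by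
    rw [setIntegral_eq_integral_of_forall_compl_eq_zero fun t ht => by
      simp only [apply_linePoint_eq_zero_of_notMem_Icc hsupp _ θ ht, sub_zero]]
    exact (integral_sub (hint s) (hint s')).symm
  have hvol : volume.real (Set.Icc (-R) R) = 2 * R := by
    rw [Real.volume_real_Icc_of_le (by linarith)]
    ring
  rw [hsub, ← hvol, ← Real.norm_eq_abs]
  exact norm_setIntegral_le_of_norm_le_const measure_Icc_lt_top
    fun t _ => abs_apply_linePoint_sub_le hf hM s s' t

end XRay

lemma support_lap_subset_disk {ψ : ℝ × ℝ → ℝ} {R : ℝ} (hsupp : tsupport ψ ⊆ disk R) :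
    Function.support (lap ψ) ⊆ disk R :=
  (subset_tsupport _).trans ((tsupport_lap_subset ψ).trans hsupp)

lemma xray_lap_sum {ι : Type*} {u : Finset ι} {f : ι → ℝ × ℝ → ℝ} {R : ι → ℝ}
    (hf : ∀ i ∈ u, ContDiff ℝ 2 (f i)) (hsupp : ∀ i ∈ u, tsupport (f i) ⊆ disk (R i))
    (s θ : ℝ) :
    xray (lap fun p => ∑ i ∈ u, f i p) s θ = ∑ i ∈ u, xray (lap (f i)) s θ := by
  rw [lap_sum hf]
  exact integral_finsetSum u fun i hi => integrable_comp_linePoint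
    (contDiff_lap (hf i hi) (zero_add 2).le).continuous (support_lap_subset_disk (hsupp i hi)) s θ

lemma KNle.abs_xray_lap_sub_le {ψ : ℝ × ℝ → ℝ} {C r R : ℝ} (h : KNle ψ C)
    (hψ : ContDiff ℝ 3 ψ) (hr : 0 < r) (hR : 0 ≤ R)
    (hinner : ∀ p ∈ tsupport ψ, r ≤ √(p.1 ^ 2 + p.2 ^ 2)) (houter : tsupport ψ ⊆ disk R)
    (s s' θ : ℝ) :
    |xray (lap ψ) s θ - xray (lap ψ) s' θ| ≤ 4 * (C / r ^ 2) * |s - s'| * (2 * R) := by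
  have := h.nonneg
  have hnormal (p : ℝ × ℝ) : |pd (-Real.sin θ, Real.cos θ) (lap ψ) p| ≤ 4 * (C / r ^ 2) :=
    calc |pd (-Real.sin θ, Real.cos θ) (lap ψ) p|
        ≤ (|-Real.sin θ| + |Real.cos θ|) * (2 * (C / r ^ 2)) :=
          h.abs_pd_lap_le hψ hr hinner _ p
      _ ≤ (1 + 1) * (2 * (C / r ^ 2)) := by
          rw [abs_neg]
          gcongr
          exacts [Real.abs_sin_le_one θ, Real.abs_cos_le_one θ]
      _ = 4 * (C / r ^ 2) := by ring
  exact abs_xray_sub_le ((contDiff_lap hψ (by norm_num)).differentiable one_ne_zero) hR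
    (support_lap_subset_disk houter) hnormal s s'

lemma annulus_subset_disk (k : ℕ) : annulus k ⊆ disk (2 ^ (k + 1)) :=
  fun _ hp => hp.2

lemma KNle.abs_xray_lap_sub_ite_le {ψ : ℝ × ℝ → ℝ} {C : ℝ} (h : KNle ψ C)
    (hψ : ContDiff ℝ 3 ψ) {k : ℕ} (hsupp : tsupport ψ ⊆ annulus k) (s θ : ℝ) :
    |xray (lap ψ) s θ - (if |s| ≤ (2 : ℝ) ^ (k + 1) then xray (lap ψ) 0 θ else 0)| ≤
      128 * C * (if |s| ≤ (2 : ℝ) ^ (k + 1) then |s| / 2 ^ (k + 1) else 0) := by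
  have houter := hsupp.trans (annulus_subset_disk k)
  split_ifs with hs
  · calc |xray (lap ψ) s θ - xray (lap ψ) 0 θ|
        ≤ 4 * (C / (2 ^ ((k : ℤ) - 1)) ^ 2) * |s - 0| * (2 * 2 ^ (k + 1)) :=
          h.abs_xray_lap_sub_le hψ (by positivity) (by positivity)
            (fun p hp => (hsupp hp).1) houter s 0 θ
      _ = 128 * C * (|s| / 2 ^ (k + 1)) := by
          rw [sub_zero, zpow_sub_one₀ two_ne_zero, zpow_natCast, pow_succ]
          field_simp
          ring
  · rw [xray_eq_zero_of_lt_abs (support_lap_subset_disk houter) (not_le.mp hs)]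
    simp

/-- The terms with `x ≤ b ^ k` are dominated by a geometric series with first term at most `1`. -/
lemma sum_Ico_ite_div_pow_le {K : Type*} [Field K] [LinearOrder K] [IsStrictOrderedRing K]
    [Archimedean K] {x b : K} (hx : 0 ≤ x) (hb : 1 < b) (m n : ℕ) :
    (∑ k ∈ Finset.Ico m n, if x ≤ b ^ k then x / b ^ k else 0) ≤ (1 - b⁻¹)⁻¹ := by
  have hb_inv : b⁻¹ < 1 := inv_lt_one_of_one_lt₀ hb
  have hexists : ∃ k, x ≤ b ^ k := (pow_unbounded_of_one_lt x hb).imp fun _ => le_of_lt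
  set k₀ := Nat.find hexists
  have hk₀ : x ≤ b ^ k₀ := Nat.find_spec hexists
  calc (∑ k ∈ Finset.Ico m n, if x ≤ b ^ k then x / b ^ k else 0)
      = ∑ k ∈ Finset.Ico m n with x ≤ b ^ k, x / b ^ k := (Finset.sum_filter _ _).symm
    _ ≤ ∑ k ∈ Finset.Ico k₀ n, x / b ^ k := by
        refine Finset.sum_le_sum_of_subset_of_nonneg (fun k hk => ?_) fun _ _ _ => by positivity
        rw [Finset.mem_filter, Finset.mem_Ico] at hk
        exact Finset.mem_Ico.mpr ⟨Nat.find_min' hexists hk.2, hk.1.2⟩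
    _ = x * ∑ k ∈ Finset.Ico k₀ n, b⁻¹ ^ k := by
        simp only [Finset.mul_sum, inv_pow, div_eq_mul_inv]
    _ ≤ b ^ k₀ * (b⁻¹ ^ k₀ / (1 - b⁻¹)) := by
        gcongr
        exact geom_sum_Ico_le_of_lt_one (by positivity) hb_inv
    _ = (1 - b⁻¹)⁻¹ := by
        rw [← mul_div_assoc, ← mul_pow, mul_inv_cancel₀ (by positivity), one_pow, one_div]

lemma abs_sum_Ico_xray_lap_sub_ite_le {C : ℝ} (hC : 0 ≤ C) {ω : ℕ → ℝ × ℝ → ℝ} {m n : ℕ}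
    (hω : ∀ k ∈ Finset.Ico m n, ContDiff ℝ 3 (ω k))
    (hsupp : ∀ k ∈ Finset.Ico m n, tsupport (ω k) ⊆ annulus k)
    (hKN : ∀ k ∈ Finset.Ico m n, KNle (ω k) C) (s θ : ℝ) :
    |∑ k ∈ Finset.Ico m n, (xray (lap (ω k)) s θ -
        if |s| ≤ (2 : ℝ) ^ (k + 1) then xray (lap (ω k)) 0 θ else 0)| ≤ 256 * C := by
  calc |∑ k ∈ Finset.Ico m n, (xray (lap (ω k)) s θ -
          if |s| ≤ (2 : ℝ) ^ (k + 1) then xray (lap (ω k)) 0 θ else 0)|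
      ≤ ∑ k ∈ Finset.Ico m n, |xray (lap (ω k)) s θ -
          if |s| ≤ (2 : ℝ) ^ (k + 1) then xray (lap (ω k)) 0 θ else 0| :=
        Finset.abs_sum_le_sum_abs _ _
    _ ≤ ∑ k ∈ Finset.Ico m n,
          128 * C * (if |s| ≤ (2 : ℝ) ^ (k + 1) then |s| / 2 ^ (k + 1) else 0) :=
        Finset.sum_le_sum fun k hk =>
          (hKN k hk).abs_xray_lap_sub_ite_le (hω k hk) (hsupp k hk) s θ
    _ = 128 * C * ∑ k ∈ Finset.Ico (m + 1) (n + 1),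
          if |s| ≤ (2 : ℝ) ^ k then |s| / 2 ^ k else 0 := by
        rw [← Finset.mul_sum,
          Finset.sum_Ico_add' (fun k => if |s| ≤ (2 : ℝ) ^ k then |s| / 2 ^ k else 0)]
    _ ≤ 128 * C * (1 - 2⁻¹)⁻¹ := by
        gcongr
        exact sum_Ico_ite_div_pow_le (abs_nonneg s) one_lt_two (m + 1) (n + 1)
    _ = 256 * C := by ring

theorem xray_dyadic_comparison_general {C : ℝ} {ω : ℕ → ℝ × ℝ → ℝ}
    (hω : ∀ k, 1 ≤ k → ContDiff ℝ 3 (ω k)) (hfin : ∃ N, ∀ k, N ≤ k → ω k = 0)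
    (hsupp : ∀ k, 1 ≤ k → tsupport (ω k) ⊆ annulus k) (hKN : ∀ k, 1 ≤ k → KNle (ω k) C)
    (s θ : ℝ) :
    |xray (lap (fun p => ∑' k : ℕ, ω (k + 1) p)) s θ -
        ∑' k : ℕ, (if |s| ≤ (2 : ℝ) ^ (k + 2) then xray (lap (ω (k + 1))) 0 θ else 0)| ≤
      256 * C := by
  obtain ⟨N, hN⟩ := hfin
  have hzero (k : ℕ) (hk : k ∉ Finset.range N) : ω (k + 1) = 0 :=
    hN _ (by rw [Finset.mem_range] at hk; omega)
  have hxray : xray (lap (fun p => ∑' k : ℕ, ω (k + 1) p)) s θ =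
      ∑ k ∈ Finset.range N, xray (lap (ω (k + 1))) s θ := by
    rw [funext fun p => tsum_eq_sum fun k hk => congrFun (hzero k hk) p]
    exact xray_lap_sum (fun k _ => (hω (k + 1) k.succ_pos).of_le (by norm_num))
      (fun k _ => (hsupp (k + 1) k.succ_pos).trans (annulus_subset_disk _)) s θ
  rw [hxray, tsum_eq_sum (s := Finset.range N) fun k hk => by simp [hzero k hk, lap_zero, xray],
    ← Finset.sum_sub_distrib, Finset.range_eq_Ico, Finset.sum_Ico_add' (fun k =>
      xray (lap (ω k)) s θ - if |s| ≤ (2 : ℝ) ^ (k + 1) then xray (lap (ω k)) 0 θ else 0) 0 N 1]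
  have hpos {k : ℕ} (hk : k ∈ Finset.Ico (0 + 1) (N + 1)) : 1 ≤ k := (Finset.mem_Ico.mp hk).1
  exact abs_sum_Ico_xray_lap_sub_ite_le (hKN 1 le_rfl).nonneg (fun k hk => hω k (hpos hk))
    (fun k hk => hsupp k (hpos hk)) (fun k hk => hKN k (hpos hk)) s θ

/-- There is a universal constant `K > 0` such that for any dyadic weight
`ω = Σ_{k≥1} ω_k` satisfying the support and regularity conditions,
`|T(Δω)(s,θ) − Σ_{k≥1, 2^{k+1} ≥ |s|} T(Δω_k)(0,θ)| ≤ K C_reg`. -/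
theorem xray_dyadic_comparison :
    ∃ K > (0:ℝ), ∀ Creg : ℝ, 0 ≤ Creg → ∀ ω : ℕ → ℝ × ℝ → ℝ,
      (∀ k, 1 ≤ k → ContDiff ℝ (⊤ : ℕ∞) (ω k)) →
      (∀ k, 1 ≤ k → HasCompactSupport (ω k)) →
      (∀ k, 1 ≤ k → ∀ p, ω k p ≤ 0) →
      (∃ N, ∀ k, N ≤ k → ω k = 0) →
      (∀ k, 1 ≤ k → tsupport (ω k) ⊆ annulus k) →
      (∀ k, 1 ≤ k → KNle (ω k) Creg) →
      ∀ s θ : ℝ,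
        |xray (lap (fun p => ∑' k : ℕ, ω (k + 1) p)) s θ -
          ∑' k : ℕ, (if |s| ≤ (2:ℝ) ^ (k + 2) then xray (lap (ω (k + 1))) 0 θ else 0)| ≤
        K * Creg := by
  refine ⟨256, by norm_num, fun Creg _ ω hω _ _ hfin hsupp hKN s θ => ?_⟩
  exact xray_dyadic_comparison_general
    (fun k hk => contDiff_infty.mp (hω k hk) 3) hfin hsupp hKN s θ

end
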